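/- Let 1 ≤ q ≤ 2, let q' be the conjugate exponent of q, let 2 ≤ r ≤ q', and define p by 1/q = 1/p + 1/r. There is an absolute constant c₀ such that for every bounded linear operator T : X → Y between real Banach spaces of rank at most n one has π_{p,q}(T) ≤ c₀^{r/p} · π_{p,q}^{m}(T), where m = ⌊n^{1 + r(1/q − 1/2)}⌋. -/

import Mathlib

open scoped ENNReal NNReal BigOperators

noncomputable section

/-- The `ℓ_p`-sum `(∑ i, f i ^ p) ^ (1/p)` of a finite family in `ℝ≥0∞`,
with the usual sup-modification for `p = ∞`. -/
def eSum (p : ℝ≥0∞) {ι : Type*} [Fintype ι] (f : ι → ℝ≥0∞) : ℝ≥0∞ :=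
  if p = ∞ then ⨆ i, f i else (∑ i, f i ^ p.toReal) ^ (1 / p.toReal)

/-- The weak `ℓ_q`-norm of a finite family of vectors:
`sup { (∑ k |⟨x_k, x*⟩|^q)^(1/q) : x* in the unit ball of the dual }`. -/
def weakLq (q : ℝ≥0∞) {X : Type*} [NormedAddCommGroup X] [NormedSpace ℝ X]
    {n : ℕ} (x : Fin n → X) : ℝ≥0∞ :=
  ⨆ f : {f : X →L[ℝ] ℝ // ‖f‖ ≤ 1}, eSum q fun k => ENNReal.ofReal |f.1 (x k)|

/-- The `(p,q)`-summing norm of `T` with respect to `n` vectors. -/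
def piN (p q : ℝ≥0∞) {X Y : Type*} [NormedAddCommGroup X] [NormedSpace ℝ X]
    [NormedAddCommGroup Y] [NormedSpace ℝ Y] (n : ℕ) (T : X →L[ℝ] Y) : ℝ≥0∞ :=
  ⨆ x : {x : Fin n → X // weakLq q x ≤ 1}, eSum p fun k => ENNReal.ofReal ‖T (x.1 k)‖

/-- The `(p,q)`-summing norm of `T`. -/
def piPQ (p q : ℝ≥0∞) {X Y : Type*} [NormedAddCommGroup X] [NormedSpace ℝ X]
    [NormedAddCommGroup Y] [NormedSpace ℝ Y] (T : X →L[ℝ] Y) : ℝ≥0∞ :=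
  ⨆ n : ℕ, piN p q n T

/-- `T` has rank at most `n`: its range is a finite-dimensional subspace of
dimension at most `n`. -/
def RankLE {X Y : Type*} [NormedAddCommGroup X] [NormedSpace ℝ X]
    [NormedAddCommGroup Y] [NormedSpace ℝ Y] (T : X →L[ℝ] Y) (n : ℕ) : Prop :=
  FiniteDimensional ℝ (LinearMap.range (T : X →ₗ[ℝ] Y)) ∧
    Module.finrank ℝ (LinearMap.range (T : X →ₗ[ℝ] Y)) ≤ n

/-- The average of `‖∑ k, ε k • x k‖²` over all `2^n` sign choices `ε ∈ {-1,1}^n`. -/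
def radAvg {X : Type*} [NormedAddCommGroup X] [NormedSpace ℝ X] {n : ℕ}
    (x : Fin n → X) : ℝ :=
  (∑ ε : Fin n → Bool, ‖∑ k, (if ε k then (1 : ℝ) else -1) • x k‖ ^ 2) / 2 ^ n

/-- The Rademacher cotype `q` constant of `T` with respect to `n` vectors. -/
def cotypeN (q : ℝ) {X Y : Type*} [NormedAddCommGroup X] [NormedSpace ℝ X]
    [NormedAddCommGroup Y] [NormedSpace ℝ Y] (n : ℕ) (T : X →L[ℝ] Y) : ℝ≥0∞ :=
  ⨆ x : {x : Fin n → X // Real.sqrt (radAvg x) ≤ 1},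
    (∑ k, ENNReal.ofReal ‖T (x.1 k)‖ ^ q) ^ (1 / q)

/-- The Rademacher cotype `q` constant of `T`. -/
def cotype (q : ℝ) {X Y : Type*} [NormedAddCommGroup X] [NormedSpace ℝ X]
    [NormedAddCommGroup Y] [NormedSpace ℝ Y] (T : X →L[ℝ] Y) : ℝ≥0∞ :=
  ⨆ n : ℕ, cotypeN q n T

/-!
Suppose `π_{p,q}^m(T) ≤ P`, and let `x` be a finite family with weak `ℓ_q`-norm at most one.
Fewer than `m` of the vectors satisfy `‖T x_k‖ > P m^{-1/p}`, and the `ℓ_p`-sum over these is at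
most `P`. On the others `‖T x_k‖ ^ p ≤ (P m^{-1/p}) ^ (p - q) ‖T x_k‖ ^ q`, so it is enough to
bound the `ℓ_q`-sum of all `‖T x_k‖` by a multiple of `n^{1/r + 1/q - 1/2} P`, which is of order
`m^{1/r} P` for the stated `m`.

To do this, put the vectors `T x_k` in Lewis position: `T x_k = L y_k` with `L` defined on a
Euclidean space of dimension `d ≤ n` and `∑ ‖y_k‖ ^ (q - 2) y_k ⊗ y_k` the identity. Then
`L = T ω`, where `ω = ∑ ‖y_k‖ ^ (q - 2) y_k ⊗ x_k` has norm at most one. Choose an orthonormal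
basis `b` greedily, each `‖L b_j‖` being maximal on the orthogonal complement of the earlier
vectors. The vectors `ω b_0, …, ω b_j` have weak `ℓ_q`-norm at most `(j + 1)^{1/q - 1/2}`, so
`‖L b_j‖` is at most `(j + 1)^{1/r - 1/2} P`. A weighted summation by parts turns this into the
bound `d^{1/r} P`, up to a constant, for the Hilbert–Schmidt-like quantity
`(∑ ‖y_k‖ ^ (q - 2) ‖L y_k‖ ^ 2)^{1/2}`, and Hölder's inequality brings in the remaining factor
`d^{1/q - 1/2}`.
-/

open Filter
open scoped RealInnerProductSpace

section RealInequalities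

theorem rpow_le_rpow_add_mul_sub {a b θ : ℝ} (ha : 0 ≤ a) (hb : 0 < b) (hθ₀ : 0 ≤ θ)
    (hθ₁ : θ ≤ 1) : a ^ θ ≤ b ^ θ + θ * b ^ (θ - 1) * (a - b) := by
  have bernoulli := rpow_one_add_le_one_add_mul_self (s := a / b - 1)
    (by linarith [div_nonneg ha hb.le]) hθ₀ hθ₁
  rw [add_sub_cancel, Real.div_rpow ha hb.le, div_le_iff₀ (by positivity)] at bernoulli
  calc a ^ θ ≤ (1 + θ * (a / b - 1)) * b ^ θ := bernoulli
    _ = b ^ θ + θ * b ^ (θ - 1) * (a - b) := by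
      rw [Real.rpow_sub_one hb.ne']
      field_simp

theorem rpow_sub_two_mul_sq {t q : ℝ} (ht : 0 ≤ t) (hq : q ≠ 0) :
    t ^ (q - 2) * t ^ 2 = t ^ q := by
  rw [← Real.rpow_natCast t 2, ← Real.rpow_add' ht (by simpa)]
  norm_num

theorem rpow_le_rpow_add_mul_sq_sub_sq {a b q : ℝ} (ha : 0 ≤ a) (hb : 0 < b) (hq₀ : 0 ≤ q)
    (hq₂ : q ≤ 2) : a ^ q ≤ b ^ q + q / 2 * b ^ (q - 2) * (a ^ 2 - b ^ 2) := by
  have sq_rpow {t : ℝ} (ht : 0 ≤ t) (s : ℝ) : (t ^ 2) ^ s = t ^ (2 * s) := by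
    rw [← Real.rpow_natCast, ← Real.rpow_mul ht, Nat.cast_ofNat]
  have tangent := rpow_le_rpow_add_mul_sub (sq_nonneg a) (pow_pos hb 2)
    (show 0 ≤ q / 2 by linarith) (by linarith)
  simp only [sq_rpow ha, sq_rpow hb.le, mul_sub, mul_div_cancel₀ q two_ne_zero, mul_one]
    at tangent ⊢
  exact tangent

theorem rpow_three_halves_sq {r : ℝ} (hr : 0 ≤ r) : (r ^ (3 / 2 : ℝ)) ^ 2 = r ^ 3 := by
  rw [← Real.rpow_mul_natCast hr, ← Real.rpow_natCast]
  norm_num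

theorem sum_rpow_sub_one_le {γ : ℝ} (hγ₀ : 0 < γ) (hγ₁ : γ ≤ 1) (n : ℕ) :
    ∑ k : Fin n, ((k : ℝ) + 1) ^ (γ - 1) ≤ (n : ℝ) ^ γ / γ := by
  induction n with
  | zero => simp [Real.zero_rpow hγ₀.ne']
  | succ n ih =>
    have tangent := rpow_le_rpow_add_mul_sub n.cast_nonneg n.cast_add_one_pos hγ₀.le hγ₁
    rw [le_div_iff₀ hγ₀] at ih ⊢
    rw [Fin.sum_univ_castSucc]
    simp only [Fin.val_castSucc, Fin.val_last]
    push_cast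
    linarith

theorem rpow_le_sum_Iic_rpow_sub_one {α : ℝ} (hα : α ≤ 1) {d : ℕ} (l : Fin d) :
    ((l : ℝ) + 1) ^ α ≤ ∑ k ∈ Finset.Iic l, ((k : ℝ) + 1) ^ (α - 1) := by
  have smallest_term (k : Fin d) (hk : k ∈ Finset.Iic l) :
      ((l : ℝ) + 1) ^ (α - 1) ≤ ((k : ℝ) + 1) ^ (α - 1) := by
    have : (k : ℝ) ≤ l := by exact_mod_cast Finset.mem_Iic.1 hk
    exact Real.rpow_le_rpow_of_nonpos (by positivity) (by linarith) (by linarith)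
  calc ((l : ℝ) + 1) ^ α = (Finset.Iic l).card • ((l : ℝ) + 1) ^ (α - 1) := by
        rw [Fin.card_Iic, nsmul_eq_mul, Real.rpow_sub_one (by positivity)]
        push_cast
        field_simp
    _ ≤ _ := Finset.card_nsmul_le_sum _ _ _ smallest_term

theorem sum_inv_sq_sum_Iic_rpow_le {γ : ℝ} (hγ₀ : 0 < γ) (hγ₁ : γ ≤ 1) (d : ℕ) :
    ∑ l : Fin d, ((∑ k ∈ Finset.Iic l, ((k : ℝ) + 1) ^ ((1 - γ) / 2 - 1)) ^ 2)⁻¹ ≤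
      (d : ℝ) ^ γ / γ :=
  calc _ ≤ ∑ l : Fin d, ((((l : ℝ) + 1) ^ ((1 - γ) / 2)) ^ 2)⁻¹ := by
        gcongr with l
        exact rpow_le_sum_Iic_rpow_sub_one (by linarith) l
    _ = ∑ l : Fin d, ((l : ℝ) + 1) ^ (γ - 1) := by
        refine Finset.sum_congr rfl fun l _ ↦ ?_
        rw [← Real.rpow_mul_natCast (by positivity), ← Real.rpow_neg (by positivity)]
        push_cast
        ring_nf
    _ ≤ (d : ℝ) ^ γ / γ := sum_rpow_sub_one_le hγ₀ hγ₁ d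

theorem sum_mul_rpow_le {ι : Type*} (s : Finset ι) {q : ℝ} (hq₀ : 0 < q) (hq₂ : q ≤ 2)
    {w b : ι → ℝ} (hw : ∀ i, 0 ≤ w i) (hb : ∀ i, 0 ≤ b i) :
    ∑ i ∈ s, w i * b i ^ q ≤
      (∑ i ∈ s, w i) ^ (1 - q / 2) * (∑ i ∈ s, w i * b i ^ 2) ^ (q / 2) := by
  have holder := Real.inner_le_weight_mul_Lp_of_nonneg s (p := 2 / q)
    ((one_le_div hq₀).2 hq₂) w (fun i ↦ b i ^ q) hw fun i ↦ Real.rpow_nonneg (hb i) q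
  simpa only [inv_div, ← Real.rpow_mul (hb _), mul_div_cancel₀ _ hq₀.ne', Real.rpow_two]
    using holder

theorem mul_mul_le_rpow_add_mul_sq {q s b c : ℝ} (hq₁ : 1 ≤ q) (hq₂ : q ≤ 2) (hb : 0 ≤ b)
    (hc : 0 ≤ c) (hs₁ : s * c ^ (2 - q) ≤ 1) (hs₀ : 0 ≤ s) :
    s * c * b ≤ 1 / q * b ^ q + (1 - 1 / q) * (s * c ^ 2) := by
  have hq₀ : 0 < q := by linarith
  have young : c ^ (q - 1) * b ≤ 1 / q * b ^ q + (1 - 1 / q) * c ^ q := by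
    have amgm := Real.geom_mean_le_arith_mean2_weighted (w₁ := 1 / q) (w₂ := 1 - 1 / q)
      (by positivity) (sub_nonneg.2 ((div_le_one hq₀).2 hq₁)) (Real.rpow_nonneg hb q)
      (Real.rpow_nonneg hc q) (by ring)
    rwa [← Real.rpow_mul hb, ← Real.rpow_mul hc, mul_one_div_cancel hq₀.ne', Real.rpow_one,
      mul_sub, mul_one_div_cancel hq₀.ne', mul_one, mul_comm b] at amgm
  have split_one : c ^ (2 - q) * c ^ (q - 1) = c := by
    rw [← Real.rpow_add_of_nonneg hc (by linarith) (by linarith)]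
    norm_num
  have split_two : c ^ (2 - q) * c ^ q = c ^ 2 := by
    rw [← Real.rpow_add_of_nonneg hc (by linarith) hq₀.le]
    norm_num
  calc s * c * b = s * c ^ (2 - q) * (c ^ (q - 1) * b) := by
        linear_combination (-(s * b)) * split_one
    _ ≤ s * c ^ (2 - q) * (1 / q * b ^ q + (1 - 1 / q) * c ^ q) := by gcongr
    _ = s * c ^ (2 - q) * (1 / q * b ^ q) + (1 - 1 / q) * (s * c ^ 2) := by
      linear_combination (1 - 1 / q) * s * split_two
    _ ≤ 1 / q * b ^ q + (1 - 1 / q) * (s * c ^ 2) :=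
      add_le_add_left (mul_le_of_le_one_left (by positivity) hs₁) _

theorem rpow_div_le_two_rpow_mul_floor_rpow {t r : ℝ} (ht : 1 ≤ t) (hr : 0 < r) :
    t ^ (1 / r) ≤ 2 ^ (1 / r) * (⌊t⌋₊ : ℝ) ^ (1 / r) := by
  have floor_pos : (1 : ℝ) ≤ ⌊t⌋₊ := by exact_mod_cast Nat.floor_pos.2 ht
  rw [← Real.mul_rpow zero_le_two (by positivity)]
  refine Real.rpow_le_rpow (by positivity) ?_ (by positivity)
  linarith [Nat.lt_floor_add_one t]

theorem one_add_rpow_le_const_rpow {q r : ℝ} (hq : q ≤ 2) (hr : 1 ≤ r) :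
    1 + (2 * r ^ (3 / 2 : ℝ) * 2 ^ (1 / r)) ^ q ≤ (17 * Real.exp 3) ^ r := by
  have hr₀ : 0 < r := by linarith
  have one_le_pow : 1 ≤ r ^ (3 / 2 : ℝ) := Real.one_le_rpow hr (by norm_num)
  have one_le_two_rpow : (1 : ℝ) ≤ 2 ^ (1 / r) := Real.one_le_rpow one_le_two (by positivity)
  have two_rpow_le : (2 : ℝ) ^ (1 / r) ≤ 2 := by
    simpa using Real.rpow_le_rpow_of_exponent_le one_le_two ((div_le_one hr₀).2 hr)
  have one_le_base : 1 ≤ 2 * r ^ (3 / 2 : ℝ) * 2 ^ (1 / r) := by nlinarith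
  have cube_le_exp : r ^ 3 ≤ Real.exp 3 ^ r := by
    rw [← Real.exp_mul, ← Nat.cast_ofNat (R := ℝ), Real.exp_nat_mul]
    exact pow_le_pow_left₀ hr₀.le (by linarith [Real.add_one_le_exp r]) 3
  calc 1 + (2 * r ^ (3 / 2 : ℝ) * 2 ^ (1 / r)) ^ q
      ≤ 1 + (2 * r ^ (3 / 2 : ℝ) * 2 ^ (1 / r)) ^ 2 := by
        rw [← Real.rpow_two]
        gcongr
    _ ≤ 1 + (2 * r ^ (3 / 2 : ℝ) * 2) ^ 2 := by gcongr
    _ ≤ 17 * r ^ 3 := by linarith [rpow_three_halves_sq hr₀.le, one_le_pow₀ (n := 3) hr]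
    _ ≤ 17 ^ r * Real.exp 3 ^ r :=
      mul_le_mul (Real.self_le_rpow_of_one_le (by norm_num) hr) cube_le_exp (by positivity)
        (by positivity)
    _ = (17 * Real.exp 3) ^ r := (Real.mul_rpow (by norm_num) (Real.exp_nonneg 3)).symm

end RealInequalities

section ParsevalFrames

variable {ι V : Type*} [Fintype ι] [NormedAddCommGroup V] [InnerProductSpace ℝ V]
  {w : ι → ℝ} {y : ι → V}

/-- The family `y` with weights `w` is a Parseval frame, i.e. `∑ k, w k • (y k ⊗ y k)` is the
identity of `V`; the identity is encoded through its quadratic form. -/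
def IsParsevalFrame (w : ι → ℝ) (y : ι → V) : Prop :=
  ∀ v, ∑ k, w k * ⟪y k, v⟫ ^ 2 = ‖v‖ ^ 2

theorem IsParsevalFrame.of_unit (h : ∀ v : V, ‖v‖ = 1 → ∑ k, w k * ⟪y k, v⟫ ^ 2 = 1) :
    IsParsevalFrame w y := by
  intro v
  obtain rfl | hv := eq_or_ne v 0
  · simp
  have hv' : ‖v‖ ≠ 0 := norm_ne_zero_iff.2 hv
  have normalized := h (‖v‖⁻¹ • v) (norm_smul_inv_norm hv)
  simp only [real_inner_smul_right, mul_pow, mul_left_comm _ (‖v‖⁻¹ ^ 2), ← Finset.mul_sum]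
    at normalized
  field_simp at normalized
  exact normalized

theorem IsParsevalFrame.sum_inner_mul_inner (h : IsParsevalFrame w y) (u v : V) :
    ∑ k, w k * ⟪y k, u⟫ * ⟪y k, v⟫ = ⟪u, v⟫ := by
  have polarized : ∑ k, w k * ⟪y k, u⟫ * ⟪y k, v⟫ =
      (∑ k, w k * ⟪y k, u + v⟫ ^ 2 - ∑ k, w k * ⟪y k, u⟫ ^ 2 - ∑ k, w k * ⟪y k, v⟫ ^ 2) / 2 := by
    simp only [← Finset.sum_sub_distrib, Finset.sum_div, inner_add_right]
    exact Finset.sum_congr rfl fun k _ ↦ by ring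
  rw [polarized, h, h, h, norm_add_sq_real]
  ring

theorem IsParsevalFrame.sum_smul_eq (h : IsParsevalFrame w y) (v : V) :
    ∑ k, (w k * ⟪y k, v⟫) • y k = v := by
  refine ext_inner_right ℝ fun u ↦ ?_
  simp only [sum_inner, real_inner_smul_left]
  exact h.sum_inner_mul_inner v u

theorem IsParsevalFrame.sum_mul_norm_sq [FiniteDimensional ℝ V] (h : IsParsevalFrame w y) :
    ∑ k, w k * ‖y k‖ ^ 2 = Module.finrank ℝ V := by
  let b := stdOrthonormalBasis ℝ V
  calc ∑ k, w k * ‖y k‖ ^ 2 = ∑ k, ∑ i, w k * ⟪y k, b i⟫ ^ 2 := by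
        simp only [← Finset.mul_sum, b.sum_sq_inner_left]
    _ = ∑ i, ∑ k, w k * ⟪y k, b i⟫ ^ 2 := Finset.sum_comm
    _ = Module.finrank ℝ V := by simp [h _]

end ParsevalFrames

section GreedyBases

variable {V Y : Type*} [NormedAddCommGroup V] [InnerProductSpace ℝ V]
  [NormedAddCommGroup Y] [NormedSpace ℝ Y] {d : ℕ}

/-- The family `h` is greedy for `L`: each `‖L (h j)‖` dominates the norm of `L` on the orthogonal
complement of `h 0, …, h (j - 1)`. -/
def IsGreedy (L : V →L[ℝ] Y) (h : Fin d → V) : Prop :=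
  ∀ j v, (∀ i < j, ⟪h i, v⟫ = 0) → ‖L v‖ ≤ ‖L (h j)‖ * ‖v‖

theorem exists_unit_forall_norm_le [FiniteDimensional ℝ V] [Nontrivial V] (L : V →L[ℝ] Y) :
    ∃ u : V, ‖u‖ = 1 ∧ ∀ v, ‖L v‖ ≤ ‖L u‖ * ‖v‖ := by
  obtain ⟨u, hu, hmax⟩ := (isCompact_sphere (0 : V) 1).exists_isMaxOn
    (NormedSpace.sphere_nonempty.2 zero_le_one) L.continuous.norm.continuousOn
  refine ⟨u, by simpa using hu, fun v ↦ ?_⟩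
  obtain rfl | hv := eq_or_ne v 0
  · simp
  have normalized : ‖L (‖v‖⁻¹ • v)‖ ≤ ‖L u‖ := hmax (by simpa using norm_smul_inv_norm (𝕜 := ℝ) hv)
  rwa [map_smul, norm_smul, norm_inv, norm_norm, inv_mul_le_iff₀ (norm_pos_iff.2 hv),
    mul_comm] at normalized

theorem exists_orthonormal_isGreedy [FiniteDimensional ℝ V] (L : V →L[ℝ] Y)
    (hd : Module.finrank ℝ V = d) : ∃ h : Fin d → V, Orthonormal ℝ h ∧ IsGreedy L h := by
  induction d generalizing V with
  | zero => exact ⟨Fin.elim0, ⟨fun i ↦ i.elim0, fun i ↦ i.elim0⟩, fun j ↦ j.elim0⟩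
  | succ d ih =>
    have := Module.nontrivial_of_finrank_eq_succ hd
    have : Fact (Module.finrank ℝ V = d + 1) := ⟨hd⟩
    obtain ⟨u, hu, u_max⟩ := exists_unit_forall_norm_le L
    let U : Submodule ℝ V := (ℝ ∙ u)ᗮ
    obtain ⟨h, h_orthonormal, h_greedy⟩ := ih (V := U) (L.comp U.subtypeL)
      (Submodule.finrank_orthogonal_span_singleton (norm_ne_zero_iff.1 (by simp [hu])))
    refine ⟨Matrix.vecCons u fun i ↦ h i, orthonormal_vecCons_iff.2 ⟨hu, fun i ↦ ?_,
      h_orthonormal.comp_linearIsometry U.subtypeₗᵢ⟩, fun j v hv ↦ ?_⟩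
    · exact Submodule.mem_orthogonal_singleton_iff_inner_right.1 (h i).2
    · cases j using Fin.cases with
      | zero => exact u_max v
      | succ j =>
        have hvU : v ∈ U := Submodule.mem_orthogonal_singleton_iff_inner_right.2 (hv 0 j.succ_pos)
        exact h_greedy j ⟨v, hvU⟩ fun i hi ↦ hv i.succ (Fin.succ_lt_succ_iff.2 hi)

theorem exists_orthonormalBasis_isGreedy [FiniteDimensional ℝ V] (L : V →L[ℝ] Y)
    (hd : Module.finrank ℝ V = d) : ∃ b : OrthonormalBasis (Fin d) ℝ V, IsGreedy L b := by
  obtain ⟨h, h_orthonormal, h_greedy⟩ := exists_orthonormal_isGreedy L hd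
  have spans : ⊤ ≤ Submodule.span ℝ (Set.range h) :=
    (h_orthonormal.linearIndependent.span_eq_top_of_card_eq_finrank' (by simp [hd])).ge
  exact ⟨.mk h_orthonormal spans, by rwa [OrthonormalBasis.coe_mk]⟩

theorem IsGreedy.norm_apply_sum_Ici_le {L : V →L[ℝ] Y} {b : OrthonormalBasis (Fin d) ℝ V}
    (h : IsGreedy L b) (a : Fin d → ℝ) (k : Fin d) :
    ‖L (∑ l ∈ Finset.Ici k, a l • b l)‖ ≤ ‖L (b k)‖ * √(∑ l, a l ^ 2) := by
  have coord (i : Fin d) : ⟪b i, ∑ l ∈ Finset.Ici k, a l • b l⟫ = if k ≤ i then a i else 0 := by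
    simp [inner_sum, real_inner_smul_right, b.inner_eq_ite]
  refine (h k _ fun i hi ↦ by rw [coord, if_neg (not_le_of_gt hi)]).trans ?_
  gcongr
  refine Real.le_sqrt_of_sq_le ?_
  rw [← b.sum_sq_inner_right]
  refine Finset.sum_le_sum fun i _ ↦ ?_
  rw [coord]
  split_ifs
  · exact le_rfl
  · simpa using sq_nonneg (a i)

theorem IsGreedy.norm_apply_le {L : V →L[ℝ] Y} {b : OrthonormalBasis (Fin d) ℝ V}
    (h : IsGreedy L b) {c : Fin d → ℝ} (hc : ∀ k, 0 < c k) (v : V) :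
    ‖L v‖ ≤ (∑ k, c k * ‖L (b k)‖) * √(∑ l, (⟪b l, v⟫ / ∑ k ∈ Finset.Iic l, c k) ^ 2) := by
  let D (l : Fin d) := ∑ k ∈ Finset.Iic l, c k
  have hD (l : Fin d) : D l ≠ 0 :=
    (Finset.sum_pos (fun k _ ↦ hc k) ⟨l, Finset.mem_Iic.2 le_rfl⟩).ne'
  let a (l : Fin d) := ⟪b l, v⟫ / D l
  have v_eq : v = ∑ k, c k • ∑ l ∈ Finset.Ici k, a l • b l :=
    calc v = ∑ l, ⟪b l, v⟫ • b l := (b.sum_repr' v).symm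
      _ = ∑ l, ∑ k ∈ Finset.Iic l, c k • a l • b l := by
        simp only [← Finset.sum_smul, smul_smul, ← Finset.sum_mul]
        exact Finset.sum_congr rfl fun l _ ↦ by rw [mul_div_cancel₀ _ (hD l)]
      _ = ∑ k, ∑ l ∈ Finset.Ici k, c k • a l • b l := Finset.sum_comm' (by simp)
      _ = ∑ k, c k • ∑ l ∈ Finset.Ici k, a l • b l := by simp only [Finset.smul_sum]
  calc ‖L v‖ = ‖∑ k, c k • L (∑ l ∈ Finset.Ici k, a l • b l)‖ := by
        conv_lhs => rw [v_eq]
        simp only [map_sum L _ Finset.univ, map_smul]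
    _ ≤ ∑ k, c k * ‖L (∑ l ∈ Finset.Ici k, a l • b l)‖ := by
        refine (norm_sum_le _ _).trans_eq (Finset.sum_congr rfl fun k _ ↦ ?_)
        rw [norm_smul, Real.norm_of_nonneg (hc k).le]
    _ ≤ ∑ k, c k * (‖L (b k)‖ * √(∑ l, a l ^ 2)) := by
        gcongr with k
        exacts [(hc k).le, h.norm_apply_sum_Ici_le a k]
    _ = _ := by simp only [← mul_assoc, Finset.sum_mul, a, D]

theorem IsGreedy.sum_mul_norm_sq_le {L : V →L[ℝ] Y} {b : OrthonormalBasis (Fin d) ℝ V}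
    (h : IsGreedy L b) {c : Fin d → ℝ} (hc : ∀ k, 0 < c k) {ι : Type*} [Fintype ι] {w : ι → ℝ}
    {y : ι → V} (hw : ∀ k, 0 ≤ w k) (hy : IsParsevalFrame w y) :
    ∑ k, w k * ‖L (y k)‖ ^ 2 ≤
      (∑ k, c k * ‖L (b k)‖) ^ 2 * ∑ l, ((∑ k ∈ Finset.Iic l, c k) ^ 2)⁻¹ := by
  let S := ∑ k, c k * ‖L (b k)‖
  let D (l : Fin d) := ∑ k ∈ Finset.Iic l, c k
  calc ∑ k, w k * ‖L (y k)‖ ^ 2 ≤ ∑ k, w k * (S ^ 2 * ∑ l, (⟪b l, y k⟫ / D l) ^ 2) := by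
        gcongr with k
        · exact hw k
        · refine (pow_le_pow_left₀ (norm_nonneg _) (h.norm_apply_le hc (y k)) 2).trans_eq ?_
          rw [mul_pow, Real.sq_sqrt (by positivity)]
    _ = S ^ 2 * ∑ l, (D l ^ 2)⁻¹ * ∑ k, w k * ⟪y k, b l⟫ ^ 2 := by
        simp only [Finset.mul_sum]
        rw [Finset.sum_comm]
        refine Finset.sum_congr rfl fun l _ ↦ Finset.sum_congr rfl fun k _ ↦ ?_
        rw [real_inner_comm]
        ring
    _ = S ^ 2 * ∑ l, (D l ^ 2)⁻¹ := by simp [hy _]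

theorem IsGreedy.sum_mul_norm_sq_le_of_norm_le {L : V →L[ℝ] Y}
    {b : OrthonormalBasis (Fin d) ℝ V} (h : IsGreedy L b) {ι : Type*} [Fintype ι] {w : ι → ℝ}
    {y : ι → V} (hw : ∀ k, 0 ≤ w k) (hy : IsParsevalFrame w y) {γ P : ℝ} (hγ₀ : 0 < γ)
    (hγ₁ : γ ≤ 1) (hP : 0 ≤ P) (hb : ∀ j : Fin d, ‖L (b j)‖ ≤ ((j : ℝ) + 1) ^ (γ - 1 / 2) * P) :
    ∑ k, w k * ‖L (y k)‖ ^ 2 ≤ 4 / γ ^ 3 * ((d : ℝ) ^ γ * P) ^ 2 := by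
  let c (k : Fin d) := ((k : ℝ) + 1) ^ ((1 - γ) / 2 - 1)
  have hc (k : Fin d) : 0 < c k := by positivity
  have weighted_sum : ∑ k, c k * ‖L (b k)‖ ≤ (d : ℝ) ^ (γ / 2) / (γ / 2) * P :=
    calc ∑ k, c k * ‖L (b k)‖ ≤ ∑ k : Fin d, ((k : ℝ) + 1) ^ (γ / 2 - 1) * P := by
          refine Finset.sum_le_sum fun k _ ↦ ?_
          refine (mul_le_mul_of_nonneg_left (hb k) (by positivity)).trans_eq ?_
          rw [← mul_assoc, ← Real.rpow_add (by positivity)]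
          ring_nf
      _ ≤ _ := by
          rw [← Finset.sum_mul]
          gcongr
          exact sum_rpow_sub_one_le (by positivity) (by linarith) d
  have inverse_squares : ∑ l, ((∑ k ∈ Finset.Iic l, c k) ^ 2)⁻¹ ≤ (d : ℝ) ^ γ / γ :=
    sum_inv_sq_sum_Iic_rpow_le hγ₀ hγ₁ d
  have square : ((d : ℝ) ^ (γ / 2)) ^ 2 = (d : ℝ) ^ γ := by
    rw [← Real.rpow_mul_natCast d.cast_nonneg, Nat.cast_ofNat, div_mul_cancel₀ γ two_ne_zero]
  calc ∑ k, w k * ‖L (y k)‖ ^ 2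
      ≤ (∑ k, c k * ‖L (b k)‖) ^ 2 * ∑ l, ((∑ k ∈ Finset.Iic l, c k) ^ 2)⁻¹ :=
        h.sum_mul_norm_sq_le hc hw hy
    _ ≤ ((d : ℝ) ^ (γ / 2) / (γ / 2) * P) ^ 2 * ((d : ℝ) ^ γ / γ) := by
        have sum_nonneg : 0 ≤ ∑ k, c k * ‖L (b k)‖ :=
          Finset.sum_nonneg fun k _ ↦ mul_nonneg (hc k).le (norm_nonneg _)
        exact mul_le_mul (pow_le_pow_left₀ sum_nonneg weighted_sum 2) inverse_squares
          (Finset.sum_nonneg fun l _ ↦ inv_nonneg.2 (sq_nonneg _)) (sq_nonneg _)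
    _ = 4 / γ ^ 3 * ((d : ℝ) ^ γ * P) ^ 2 := by
        rw [mul_pow, div_pow, square]
        ring

end GreedyBases

section LewisPosition

variable {ι V : Type*} [Fintype ι] [NormedAddCommGroup V] [InnerProductSpace ℝ V]
  {q : ℝ} {y φ : ι → V}

/-- The family `y` is in Lewis position of exponent `q`: the measure with mass `‖y k‖ ^ q` at
the direction of `y k` is isotropic. For `y k = 0` the weight `‖y k‖ ^ (q - 2)` takes whatever value
`Real.rpow` assigns to it, which is harmless. -/
def IsLewisPosition (q : ℝ) (y : ι → V) : Prop :=
  IsParsevalFrame (fun k ↦ ‖y k‖ ^ (q - 2)) y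

/-- No linear change of variables of determinant one decreases the `ℓ_q`-sum of the norms of `y`.
Up to scaling, such families are in Lewis position. -/
def IsVolumeMinimal (q : ℝ) (y : ι → V) : Prop :=
  ∀ B : V →ₗ[ℝ] V, LinearMap.det B = 1 → ∑ k, ‖y k‖ ^ q ≤ ∑ k, ‖B (y k)‖ ^ q

theorem tendsto_sum_norm_rpow_cocompact_atTop {E : Type*} [NormedAddCommGroup E] [ProperSpace E]
    (hq : 0 < q) :
    Tendsto (fun y : ι → E ↦ ∑ k, ‖y k‖ ^ q) (cocompact (ι → E)) atTop := by
  refine tendsto_atTop_mono (fun y ↦ ?_) ((tendsto_rpow_atTop hq).comp tendsto_norm_cocompact_atTop)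
  have sum_nonneg : 0 ≤ ∑ k, ‖y k‖ ^ q := by positivity
  refine (Real.le_rpow_inv_iff_of_pos (norm_nonneg y) sum_nonneg hq).1 ?_
  refine (pi_norm_le_iff_of_nonneg (by positivity)).2 fun k ↦ ?_
  refine (Real.le_rpow_inv_iff_of_pos (norm_nonneg _) sum_nonneg hq).2 ?_
  exact Finset.single_le_sum (f := fun k ↦ ‖y k‖ ^ q) (fun _ _ ↦ by positivity) (Finset.mem_univ k)

theorem exists_isVolumeMinimal [FiniteDimensional ℝ V] (hq : 0 < q)
    (hφ : Submodule.span ℝ (Set.range φ) = ⊤) :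
    ∃ A : V ≃ₗ[ℝ] V, IsVolumeMinimal q fun k ↦ A (φ k) := by
  let eval : (V →L[ℝ] V) →ₗ[ℝ] (ι → V) :=
    LinearMap.pi fun k ↦ (ContinuousLinearMap.apply ℝ V (φ k)).toLinearMap
  have ker_eval : eval.ker = ⊥ := LinearMap.ker_eq_bot'.2 fun A hA ↦
    ContinuousLinearMap.coe_injective (LinearMap.ext_on_range hφ fun k ↦ congrFun hA k)
  have coercive : Tendsto (fun A : V →L[ℝ] V ↦ ∑ k, ‖A (φ k)‖ ^ q) (cocompact _) atTop :=
    (tendsto_sum_norm_rpow_cocompact_atTop hq).comp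
      (LinearMap.isClosedEmbedding_of_injective ker_eval).tendsto_cocompact
  have continuous_energy : Continuous fun A : V →L[ℝ] V ↦ ∑ k, ‖A (φ k)‖ ^ q :=
    continuous_finsetSum _ fun k _ ↦
      ((ContinuousLinearMap.apply ℝ V (φ k)).continuous.norm).rpow_const fun _ ↦ Or.inr hq.le
  have closed_det : IsClosed {A : V →L[ℝ] V | A.det = 1} :=
    isClosed_eq ContinuousLinearMap.continuous_det continuous_const
  obtain ⟨A, det_A, A_min⟩ := continuous_energy.continuousOn.exists_isMinOn' closed_det
    (x₀ := .id ℝ V) LinearMap.det_id ((coercive.mono_left inf_le_left).eventually_ge_atTop _)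
  refine ⟨A.toLinearMap.equivOfDetNeZero (det_A.trans_ne one_ne_zero), fun B det_B ↦ ?_⟩
  have det_comp : (B.toContinuousLinearMap.comp A).det = 1 :=
    (LinearMap.det_comp B A.toLinearMap).trans (by rw [det_B, one_mul]; exact det_A)
  exact A_min det_comp

theorem IsVolumeMinimal.det_rpow_mul_le [FiniteDimensional ℝ V] [Nontrivial V]
    (h : IsVolumeMinimal q y) {B : V →ₗ[ℝ] V} (hB : 0 < LinearMap.det B) :
    LinearMap.det B ^ (q / Module.finrank ℝ V) * ∑ k, ‖y k‖ ^ q ≤ ∑ k, ‖B (y k)‖ ^ q := by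
  set d := Module.finrank ℝ V
  have hd : (d : ℝ) ≠ 0 := Nat.cast_ne_zero.2 Module.finrank_pos.ne'
  set c := LinearMap.det B ^ (-(1 / d : ℝ)) with hc
  have c_pos : 0 < c := Real.rpow_pos_of_pos hB _
  have det_smul : LinearMap.det (c • B) = 1 := by
    rw [LinearMap.det_smul, hc, ← Real.rpow_mul_natCast hB.le, neg_mul, one_div_mul_cancel hd,
      Real.rpow_neg_one, inv_mul_cancel₀ hB.ne']
  have minimality := h (c • B) det_smul
  have c_rpow : c ^ q = (LinearMap.det B ^ (q / d))⁻¹ := by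
    rw [hc, ← Real.rpow_mul hB.le, ← Real.rpow_neg hB.le]
    ring_nf
  simp only [LinearMap.smul_apply, norm_smul, Real.norm_of_nonneg c_pos.le,
    Real.mul_rpow c_pos.le (norm_nonneg _), ← Finset.mul_sum, c_rpow] at minimality
  rwa [le_inv_mul_iff₀ (by positivity)] at minimality

theorem sum_norm_transvection_rpow_le (hq₀ : 0 < q) (hq₂ : q ≤ 2) (y : ι → V) {v : V}
    (hv : ‖v‖ = 1) (t : ℝ) :
    ∑ k, ‖LinearMap.transvection (innerₗ V v) (t • v) (y k)‖ ^ q ≤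
      ∑ k, ‖y k‖ ^ q + q / 2 * (∑ k, ‖y k‖ ^ (q - 2) * ⟪y k, v⟫ ^ 2) * (2 * t + t ^ 2) := by
  have norm_sq (u : V) : ‖LinearMap.transvection (innerₗ V v) (t • v) u‖ ^ 2 - ‖u‖ ^ 2 =
      ⟪u, v⟫ ^ 2 * (2 * t + t ^ 2) := by
    rw [LinearMap.transvection.apply, innerₗ_apply_apply, smul_smul, norm_add_sq_real, norm_smul,
      hv, real_inner_smul_right, real_inner_comm v u, mul_one, Real.norm_eq_abs, sq_abs]
    ring
  rw [Finset.mul_sum, Finset.sum_mul, ← Finset.sum_add_distrib]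
  refine Finset.sum_le_sum fun k _ ↦ ?_
  obtain hk | hk := eq_or_ne (y k) 0
  · simp [hk, Real.zero_rpow hq₀.ne']
  · refine (rpow_le_rpow_add_mul_sq_sub_sq (norm_nonneg _) (norm_pos_iff.2 hk) hq₀.le
      hq₂).trans_eq ?_
    rw [norm_sq]
    ring

theorem mul_eq_two_mul_of_forall_mul_rpow_le {a b α : ℝ}
    (h : ∀ t > -1, a * (1 + t) ^ α ≤ a + b * (2 * t + t ^ 2)) : α * a = 2 * b := by
  let f (t : ℝ) := a + b * (2 * t + t ^ 2) - a * (1 + t) ^ α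
  have min_zero : IsLocalMin f 0 := by
    filter_upwards [eventually_gt_nhds (show (-1 : ℝ) < 0 by norm_num)] with t ht
    simpa [f] using h t ht
  have hasDerivAt_zero : HasDerivAt f (2 * b - α * a) 0 := by
    have power : HasDerivAt (fun t : ℝ ↦ (1 + t) ^ α) α 0 := by
      simpa using ((hasDerivAt_id (0 : ℝ)).const_add 1).rpow_const (p := α) (Or.inl (by norm_num))
    have quadratic : HasDerivAt (fun t : ℝ ↦ 2 * t + t ^ 2) 2 0 := by
      simpa using ((hasDerivAt_id' (0 : ℝ)).const_mul 2).fun_add (hasDerivAt_pow 2 (0 : ℝ))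
    exact (((quadratic.const_mul b).const_add a).sub (power.const_mul a)).congr_deriv (by ring)
  linarith [min_zero.hasDerivAt_eq_zero hasDerivAt_zero]

theorem IsVolumeMinimal.finrank_mul_sum_eq [FiniteDimensional ℝ V] (h : IsVolumeMinimal q y)
    (hq₀ : 0 < q) (hq₂ : q ≤ 2) {v : V} (hv : ‖v‖ = 1) :
    Module.finrank ℝ V * ∑ k, ‖y k‖ ^ (q - 2) * ⟪y k, v⟫ ^ 2 = ∑ k, ‖y k‖ ^ q := by
  have : Nontrivial V := ⟨v, 0, norm_ne_zero_iff.1 (by simp [hv])⟩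
  have hd : (Module.finrank ℝ V : ℝ) ≠ 0 := Nat.cast_ne_zero.2 Module.finrank_pos.ne'
  have first_variation := mul_eq_two_mul_of_forall_mul_rpow_le fun t ht ↦ by
    have det_eq : LinearMap.det (LinearMap.transvection (innerₗ V v) (t • v)) = 1 + t := by
      simp [LinearMap.transvection.det, hv]
    have minimality := h.det_rpow_mul_le (det_eq.trans_gt (by linarith))
    rw [det_eq, mul_comm] at minimality
    exact minimality.trans (sum_norm_transvection_rpow_le hq₀ hq₂ y hv t)
  field_simp at first_variation
  exact first_variation.symm

theorem exists_isLewisPosition [FiniteDimensional ℝ V] (hq₀ : 0 < q) (hq₂ : q ≤ 2)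
    (hφ : Submodule.span ℝ (Set.range φ) = ⊤) :
    ∃ A : V ≃ₗ[ℝ] V, IsLewisPosition q fun k ↦ A (φ k) := by
  obtain hV | hV := subsingleton_or_nontrivial V
  · exact ⟨.refl ℝ V, fun v ↦ by simp [Subsingleton.elim _ (0 : V)]⟩
  obtain ⟨A, hA⟩ := exists_isVolumeMinimal hq₀ hφ
  set y := fun k ↦ A (φ k)
  set E := ∑ k, ‖y k‖ ^ q
  have E_pos : 0 < E := by
    obtain ⟨k, hk⟩ : ∃ k, φ k ≠ 0 := by
      by_contra! all_zero
      rw [funext all_zero] at hφ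
      simp [Submodule.span_eq_bot.2] at hφ
    refine Finset.sum_pos' (fun _ _ ↦ by positivity) ⟨k, Finset.mem_univ k, ?_⟩
    exact Real.rpow_pos_of_pos (norm_pos_iff.2 (by simpa [y] using hk)) q
  have hd : (0 : ℝ) < Module.finrank ℝ V := Nat.cast_pos.2 Module.finrank_pos
  set c := (Module.finrank ℝ V / E) ^ q⁻¹
  have c_pos : 0 < c := by positivity
  have c_rpow : c ^ q = Module.finrank ℝ V / E := Real.rpow_inv_rpow (by positivity) hq₀.ne'
  refine ⟨A.trans (LinearEquiv.smulOfNeZero ℝ V c c_pos.ne'), .of_unit fun v hv ↦ ?_⟩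
  calc ∑ k, ‖c • y k‖ ^ (q - 2) * ⟪c • y k, v⟫ ^ 2
      = ∑ k, c ^ q * (‖y k‖ ^ (q - 2) * ⟪y k, v⟫ ^ 2) := by
        refine Finset.sum_congr rfl fun k _ ↦ ?_
        rw [norm_smul, Real.norm_of_nonneg c_pos.le, Real.mul_rpow c_pos.le (norm_nonneg _),
          real_inner_smul_left, ← rpow_sub_two_mul_sq c_pos.le hq₀.ne']
        ring
    _ = Module.finrank ℝ V * (∑ k, ‖y k‖ ^ (q - 2) * ⟪y k, v⟫ ^ 2) / E := by
        rw [← Finset.mul_sum, c_rpow]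
        ring
    _ = 1 := by rw [hA.finrank_mul_sum_eq hq₀ hq₂ hv, div_self E_pos.ne']

theorem exists_isLewisPosition_factorization {Y : Type*} [NormedAddCommGroup Y] [NormedSpace ℝ Y]
    (hq₀ : 0 < q) (hq₂ : q ≤ 2) (z : ι → Y) {d : ℕ}
    (hd : Module.finrank ℝ (Submodule.span ℝ (Set.range z)) = d) :
    ∃ (y : ι → EuclideanSpace ℝ (Fin d)) (L : EuclideanSpace ℝ (Fin d) →L[ℝ] Y),
      IsLewisPosition q y ∧ ∀ k, L (y k) = z k := by
  set S := Submodule.span ℝ (Set.range z)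
  have : FiniteDimensional ℝ S := .span_of_finite ℝ (Set.finite_range z)
  have z_mem (k : ι) : z k ∈ S := Submodule.subset_span ⟨k, rfl⟩
  let e : S ≃ₗ[ℝ] EuclideanSpace ℝ (Fin d) := .ofFinrankEq _ _ (by simp [hd])
  have span_eq : Submodule.span ℝ (Set.range fun k ↦ e ⟨z k, z_mem k⟩) = ⊤ := by
    have top := (Submodule.span_range_subtype_eq_top_iff S z_mem).2 rfl
    rw [Set.range_comp' e]
    exact (Submodule.span_image e.toLinearMap).trans (by rw [top, Submodule.map_top, e.range])
  obtain ⟨A, hA⟩ := exists_isLewisPosition hq₀ hq₂ span_eq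
  let L : EuclideanSpace ℝ (Fin d) →ₗ[ℝ] Y := S.subtype ∘ₗ (e.trans A).symm
  exact ⟨_, L.toContinuousLinearMap, hA, fun k ↦ by simp [L]⟩

variable {Y : Type*} [NormedAddCommGroup Y] [NormedSpace ℝ Y]

theorem IsLewisPosition.sum_norm_rpow_le [FiniteDimensional ℝ V] (h : IsLewisPosition q y)
    (hq₀ : 0 < q) (hq₂ : q ≤ 2) (L : V →L[ℝ] Y) :
    ∑ k, ‖L (y k)‖ ^ q ≤ (Module.finrank ℝ V : ℝ) ^ (1 - q / 2) *
      (∑ k, ‖y k‖ ^ (q - 2) * ‖L (y k)‖ ^ 2) ^ (q / 2) := by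
  let b (k : ι) := ‖L (y k)‖ / ‖y k‖
  have norm_mul_b (k : ι) : ‖y k‖ * b k = ‖L (y k)‖ :=
    mul_div_cancel_of_imp' fun hk ↦ by rw [norm_eq_zero.1 hk, map_zero, norm_zero]
  have holder := sum_mul_rpow_le Finset.univ hq₀ hq₂ (w := fun k ↦ ‖y k‖ ^ q) (b := b)
    (fun k ↦ by positivity) fun k ↦ by positivity
  have weighted_rpow (k : ι) : ‖y k‖ ^ q * b k ^ q = ‖L (y k)‖ ^ q := by
    rw [← Real.mul_rpow (norm_nonneg _) (by positivity), norm_mul_b]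
  have weighted_sq (k : ι) : ‖y k‖ ^ q * b k ^ 2 = ‖y k‖ ^ (q - 2) * ‖L (y k)‖ ^ 2 := by
    rw [← rpow_sub_two_mul_sq (norm_nonneg _) hq₀.ne', mul_assoc, ← mul_pow, norm_mul_b]
  have total_weight : ∑ k, ‖y k‖ ^ q = Module.finrank ℝ V := by
    simpa only [rpow_sub_two_mul_sq (norm_nonneg _) hq₀.ne'] using h.sum_mul_norm_sq
  simpa only [weighted_rpow, weighted_sq, total_weight] using holder

end LewisPosition

section SummingBounds

variable {ι X Y : Type*} [NormedAddCommGroup X] [NormedSpace ℝ X] [NormedAddCommGroup Y]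
  [NormedSpace ℝ Y] {p q C P : ℝ} {m : ℕ} {T : X →L[ℝ] Y}

/-- The weak `ℓ_q`-norm of the finite family `x` is at most `C`. This is the counterpart of
`weakLq` with real exponents and an arbitrary index type. -/
def WeakSumLE [Fintype ι] (q C : ℝ) (x : ι → X) : Prop :=
  ∀ f : X →L[ℝ] ℝ, ‖f‖ ≤ 1 → ∑ i, |f (x i)| ^ q ≤ C ^ q

/-- The `(p,q)`-summing norm of `T` with respect to `m` vectors is at most `P`, for real exponents
`p` and `q`. -/
def SummingLE (p q : ℝ) (m : ℕ) (T : X →L[ℝ] Y) (P : ℝ) : Prop :=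
  ∀ x : Fin m → X, WeakSumLE q 1 x → ∑ i, ‖T (x i)‖ ^ p ≤ P ^ p

theorem eSum_ofReal_le_ofReal_iff [Fintype ι] (hp : 0 < p) {a : ι → ℝ} (ha : ∀ i, 0 ≤ a i)
    (hC : 0 ≤ C) :
    eSum (ENNReal.ofReal p) (fun i ↦ ENNReal.ofReal (a i)) ≤ ENNReal.ofReal C ↔
      ∑ i, a i ^ p ≤ C ^ p := by
  simp only [eSum, if_neg ENNReal.ofReal_ne_top, ENNReal.toReal_ofReal hp.le,
    ENNReal.ofReal_rpow_of_nonneg (ha _) hp.le]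
  rw [one_div, ENNReal.rpow_inv_le_iff hp, ENNReal.ofReal_rpow_of_nonneg hC hp.le,
    ← ENNReal.ofReal_sum_of_nonneg fun i _ ↦ Real.rpow_nonneg (ha i) p,
    ENNReal.ofReal_le_ofReal_iff (Real.rpow_nonneg hC p)]

theorem weakLq_le_one_iff (hq : 0 < q) {x : Fin m → X} :
    weakLq (ENNReal.ofReal q) x ≤ 1 ↔ WeakSumLE q 1 x := by
  rw [weakLq, iSup_le_iff, Subtype.forall, ← ENNReal.ofReal_one]
  exact forall₂_congr fun f _ ↦
    eSum_ofReal_le_ofReal_iff hq (fun i ↦ abs_nonneg (f (x i))) zero_le_one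

theorem summingLE_iff_piN_le (hp : 0 < p) (hq : 0 < q) (hP : 0 ≤ P) :
    SummingLE p q m T P ↔
      piN (ENNReal.ofReal p) (ENNReal.ofReal q) m T ≤ ENNReal.ofReal P := by
  rw [piN, iSup_le_iff, Subtype.forall]
  exact forall_congr' fun x ↦ imp_congr (weakLq_le_one_iff hq).symm
    (eSum_ofReal_le_ofReal_iff hp (fun i ↦ norm_nonneg (T (x i))) hP).symm

theorem piPQ_le_mul_piN (hp : 0 < p) (hq : 0 < q) (hC : 0 < C)
    (h : ∀ P, 0 ≤ P → SummingLE p q m T P → ∀ N, SummingLE p q N T (C * P)) :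
    piPQ (ENNReal.ofReal p) (ENNReal.ofReal q) T ≤
      ENNReal.ofReal C * piN (ENNReal.ofReal p) (ENNReal.ofReal q) m T := by
  obtain htop | hfin := eq_or_ne (piN (ENNReal.ofReal p) (ENNReal.ofReal q) m T) ∞
  · simp [htop, ENNReal.mul_top, hC]
  refine iSup_le fun N ↦ ?_
  have hP := ENNReal.ofReal_toReal hfin
  rw [← hP, ← ENNReal.ofReal_mul hC.le]
  exact (summingLE_iff_piN_le hp hq (by positivity)).1
    (h _ ENNReal.toReal_nonneg
      ((summingLE_iff_piN_le hp hq ENNReal.toReal_nonneg).2 hP.ge) N)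

theorem WeakSumLE.comp_injective {κ : Type*} [Fintype ι] [Fintype κ] {x : ι → X}
    (h : WeakSumLE q C x) {e : κ → ι} (he : Function.Injective e) : WeakSumLE q C (x ∘ e) :=
  fun f hf ↦ calc ∑ k, |f (x (e k))| ^ q
      = ∑ i ∈ Finset.univ.map ⟨e, he⟩, |f (x i)| ^ q := by simp
    _ ≤ ∑ i, |f (x i)| ^ q := Finset.sum_le_univ_sum_of_nonneg fun i ↦ by positivity
    _ ≤ C ^ q := h f hf

theorem SummingLE.sum_le [Fintype ι] (hp : 0 < p) (hq : 0 < q) (hC : 0 < C) (hP : 0 ≤ P)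
    (h : SummingLE p q m T P) (hm : Fintype.card ι ≤ m) {x : ι → X} (hx : WeakSumLE q C x) :
    ∑ i, ‖T (x i)‖ ^ p ≤ (C * P) ^ p := by
  let e : ι → Fin m := Fin.castLE hm ∘ Fintype.equivFin ι
  have he : Function.Injective e := (Fin.castLE_injective hm).comp (Fintype.equivFin ι).injective
  let x' : Fin m → X := Function.extend e (fun i ↦ C⁻¹ • x i) 0
  have sum_extend {φ : X → ℝ} (hφ : φ 0 = 0) : ∑ j, φ (x' j) = ∑ i, φ (C⁻¹ • x i) := by
    refine (Fintype.sum_of_injective e he _ _ (fun j hj ↦ ?_) fun i ↦ ?_).symm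
    · simp only [x', Function.extend_apply' _ _ _ hj, Pi.zero_apply, hφ]
    · simp only [x', he.extend_apply]
  have hx' : WeakSumLE q 1 x' := by
    intro f hf
    rw [sum_extend (φ := fun v ↦ |f v| ^ q) (by simp [hq.ne'])]
    simp only [map_smul, smul_eq_mul, abs_mul, abs_of_pos (inv_pos.2 hC),
      Real.mul_rpow (inv_nonneg.2 hC.le) (abs_nonneg _), Real.inv_rpow hC.le, ← Finset.mul_sum,
      Real.one_rpow]
    exact inv_mul_le_one_of_le₀ (hx f hf) (by positivity)
  have bound := h x' hx'
  rw [sum_extend (φ := fun v ↦ ‖T v‖ ^ p) (by simp [hp.ne'])] at bound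
  simp only [map_smul, norm_smul, norm_inv, Real.norm_of_nonneg hC.le,
    Real.mul_rpow (inv_nonneg.2 hC.le) (norm_nonneg _), Real.inv_rpow hC.le, ← Finset.mul_sum]
    at bound
  rwa [inv_mul_le_iff₀ (by positivity), ← Real.mul_rpow hC.le hP] at bound

theorem SummingLE.trans_le {P' : ℝ} (h : SummingLE p q m T P) (hp : 0 ≤ p) (hP : 0 ≤ P)
    (hPP' : P ≤ P') : SummingLE p q m T P' :=
  fun x hx ↦ (h x hx).trans (Real.rpow_le_rpow hP hPP' hp)

theorem SummingLE.mono {n : ℕ} (hp : 0 < p) (hq : 0 < q) (hP : 0 ≤ P) (h : SummingLE p q m T P)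
    (hn : n ≤ m) : SummingLE p q n T P := fun x hx ↦ by
  simpa using h.sum_le hp hq one_pos hP (by simpa using hn) hx

end SummingBounds

section Synthesis

variable {ι V X Y : Type*} [Fintype ι] [NormedAddCommGroup V] [InnerProductSpace ℝ V]
  [NormedAddCommGroup X] [NormedSpace ℝ X] [NormedAddCommGroup Y] [NormedSpace ℝ Y]
  {w : ι → ℝ} {y : ι → V} {x : ι → X} {p q r P : ℝ}

/-- The operator `∑ k, w k • (y k ⊗ x k)` which rebuilds a vector from its frame coefficients with
respect to `y`, with `x` in place of `y`. -/
def frameSynthesis (w : ι → ℝ) (y : ι → V) (x : ι → X) : V →L[ℝ] X :=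
  ∑ k, (w k • innerSL ℝ (y k)).smulRight (x k)

theorem frameSynthesis_apply (w : ι → ℝ) (y : ι → V) (x : ι → X) (v : V) :
    frameSynthesis w y x v = ∑ k, (w k * ⟪y k, v⟫) • x k := by
  simp [frameSynthesis]

theorem IsParsevalFrame.comp_frameSynthesis (h : IsParsevalFrame w y) {T : X →L[ℝ] Y}
    {L : V →L[ℝ] Y} (hL : ∀ k, L (y k) = T (x k)) : T ∘L frameSynthesis w y x = L := by
  ext v
  conv_rhs => rw [← h.sum_smul_eq v]
  simp only [ContinuousLinearMap.comp_apply, frameSynthesis_apply, map_sum, map_smul, hL]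

theorem norm_rpow_sub_two_mul_abs_inner_rpow_le_one (hq₂ : q ≤ 2) (u : V) {v : V} (hv : ‖v‖ = 1) :
    ‖u‖ ^ (q - 2) * |⟪u, v⟫| ^ (2 - q) ≤ 1 := by
  have inner_le : |⟪u, v⟫| ≤ ‖u‖ := by simpa [hv] using abs_real_inner_le_norm u v
  rw [← neg_sub, Real.rpow_neg (norm_nonneg u)]
  refine inv_mul_le_one_of_le₀ ?_ (by positivity)
  exact Real.rpow_le_rpow (abs_nonneg _) inner_le (sub_nonneg.2 hq₂)

theorem IsLewisPosition.norm_frameSynthesis_le_one (hy : IsLewisPosition q y) (hq₁ : 1 ≤ q)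
    (hq₂ : q ≤ 2) (hx : WeakSumLE q 1 x) :
    ‖frameSynthesis (fun k ↦ ‖y k‖ ^ (q - 2)) y x‖ ≤ 1 := by
  refine ContinuousLinearMap.opNorm_le_of_unit_norm zero_le_one fun v hv ↦ ?_
  obtain ⟨f, hf, hfv⟩ :=
    exists_dual_vector'' ℝ (frameSynthesis (fun k ↦ ‖y k‖ ^ (q - 2)) y x v)
  rw [RCLike.ofReal_real_eq_id, id_eq] at hfv
  have weak : ∑ k, |f (x k)| ^ q ≤ 1 := by simpa using hx f hf
  have frame : ∑ k, ‖y k‖ ^ (q - 2) * |⟪y k, v⟫| ^ 2 = 1 := by simpa [hv] using hy v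
  calc ‖frameSynthesis (fun k ↦ ‖y k‖ ^ (q - 2)) y x v‖
      = ∑ k, ‖y k‖ ^ (q - 2) * ⟪y k, v⟫ * f (x k) := by
        rw [← hfv]
        simp [frameSynthesis_apply]
    _ ≤ ∑ k, ‖y k‖ ^ (q - 2) * |⟪y k, v⟫| * |f (x k)| := by
        refine Finset.sum_le_sum fun k _ ↦ (le_abs_self _).trans_eq ?_
        rw [abs_mul, abs_mul, abs_of_nonneg (by positivity)]
    _ ≤ ∑ k, (1 / q * |f (x k)| ^ q + (1 - 1 / q) * (‖y k‖ ^ (q - 2) * |⟪y k, v⟫| ^ 2)) :=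
        Finset.sum_le_sum fun k _ ↦ mul_mul_le_rpow_add_mul_sq hq₁ hq₂ (abs_nonneg _)
          (abs_nonneg _) (norm_rpow_sub_two_mul_abs_inner_rpow_le_one hq₂ (y k) hv)
          (by positivity)
    _ = 1 / q * ∑ k, |f (x k)| ^ q + (1 - 1 / q) := by
        rw [Finset.sum_add_distrib, ← Finset.mul_sum, ← Finset.mul_sum, frame, mul_one]
    _ ≤ 1 := by nlinarith [one_div_nonneg.2 (zero_le_one.trans hq₁)]

theorem sum_sq_apply_le_of_orthonormal {e : ι → V} (he : Orthonormal ℝ e) (g : V →L[ℝ] ℝ) :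
    ∑ i, g (e i) ^ 2 ≤ ‖g‖ ^ 2 := by
  set s := ∑ i, g (e i) ^ 2
  let v := ∑ i, g (e i) • e i
  have norm_v : ‖v‖ ^ 2 = s := by
    rw [← real_inner_self_eq_norm_sq, he.inner_sum]
    exact Finset.sum_congr rfl fun i _ ↦ by simp [sq]
  have apply_v : g v = s := by simp [v, s, sq]
  have bound : s ≤ ‖g‖ * ‖v‖ := apply_v ▸ (le_abs_self _).trans (g.le_opNorm v)
  nlinarith [norm_nonneg v, norm_nonneg g]

theorem weakSumLE_apply_orthonormal {e : ι → V} (he : Orthonormal ℝ e) {ω : V →L[ℝ] X}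
    (hω : ‖ω‖ ≤ 1) (hq₀ : 0 < q) (hq₂ : q ≤ 2) :
    WeakSumLE q ((Fintype.card ι : ℝ) ^ (1 / q - 1 / 2)) fun i ↦ ω (e i) := by
  intro f hf
  have bessel : ∑ i, |f (ω (e i))| ^ 2 ≤ 1 := calc
    ∑ i, |f (ω (e i))| ^ 2 ≤ ‖f ∘L ω‖ ^ 2 := by
      simpa using sum_sq_apply_le_of_orthonormal he (f ∘L ω)
    _ ≤ 1 := pow_le_one₀ (norm_nonneg _) <| (f.opNorm_comp_le ω).trans <|
      mul_le_one₀ hf (norm_nonneg ω) hω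
  have holder := sum_mul_rpow_le Finset.univ hq₀ hq₂ (w := 1) (b := fun i ↦ |f (ω (e i))|)
    (fun _ ↦ zero_le_one) fun i ↦ abs_nonneg _
  simp only [Pi.one_apply, one_mul, Finset.sum_const, Finset.card_univ, nsmul_eq_mul, mul_one]
    at holder
  rw [← Real.rpow_mul (Nat.cast_nonneg _), show (1 / q - 1 / 2) * q = 1 - q / 2 by field_simp]
  exact holder.trans <| mul_le_of_le_one_right (by positivity) <|
    Real.rpow_le_one (Finset.sum_nonneg fun i _ ↦ by positivity) bessel (by positivity)

theorem SummingLE.le_of_forall_le_norm_apply_orthonormal [Nonempty ι] {m : ℕ} {T : X →L[ℝ] Y}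
    (h : SummingLE p q m T P) (hp : 0 < p) (hq₀ : 0 < q) (hq₂ : q ≤ 2) (hpq : 1 / q = 1 / p + 1 / r)
    (hP : 0 ≤ P) (hm : Fintype.card ι ≤ m) {e : ι → V} (he : Orthonormal ℝ e) {ω : V →L[ℝ] X}
    (hω : ‖ω‖ ≤ 1) {t : ℝ} (ht₀ : 0 ≤ t) (ht : ∀ i, t ≤ ‖T (ω (e i))‖) :
    t ≤ (Fintype.card ι : ℝ) ^ (1 / r - 1 / 2) * P := by
  have hc : (0 : ℝ) < Fintype.card ι := by exact_mod_cast Fintype.card_pos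
  have sum_bound : (Fintype.card ι : ℝ) * t ^ p ≤
      ((Fintype.card ι : ℝ) ^ (1 / q - 1 / 2) * P) ^ p := calc
    (Fintype.card ι : ℝ) * t ^ p = ∑ _i : ι, t ^ p := by simp
    _ ≤ ∑ i, ‖T (ω (e i))‖ ^ p :=
      Finset.sum_le_sum fun i _ ↦ Real.rpow_le_rpow ht₀ (ht i) hp.le
    _ ≤ _ := h.sum_le hp hq₀ (by positivity) hP hm (weakSumLE_apply_orthonormal he hω hq₀ hq₂)
  refine (Real.rpow_le_rpow_iff ht₀ (by positivity) hp).1 (le_of_mul_le_mul_left ?_ hc)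
  refine sum_bound.trans_eq ?_
  have exponent_eq : (1 / q - 1 / 2) * p = 1 + (1 / r - 1 / 2) * p := by
    rw [hpq, add_sub_assoc, add_mul, one_div_mul_cancel hp.ne']
  rw [Real.mul_rpow (by positivity) hP, Real.mul_rpow (by positivity) hP, ← Real.rpow_mul hc.le,
    ← Real.rpow_mul hc.le, exponent_eq, Real.rpow_add hc, Real.rpow_one, mul_assoc]

theorem IsLewisPosition.sum_norm_rpow_le_of_isGreedy [FiniteDimensional ℝ V] {d : ℕ}
    (hy : IsLewisPosition q y) (hq₀ : 0 < q) (hq₂ : q ≤ 2) (hr₀ : 0 < r) (hr₁ : 1 / r ≤ 1)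
    (hP : 0 ≤ P) {L : V →L[ℝ] Y} {b : OrthonormalBasis (Fin d) ℝ V} (hb : IsGreedy L b)
    (hLb : ∀ j : Fin d, ‖L (b j)‖ ≤ ((j : ℝ) + 1) ^ (1 / r - 1 / 2) * P) :
    ∑ k, ‖L (y k)‖ ^ q ≤ (2 * r ^ (3 / 2 : ℝ) * (d : ℝ) ^ (1 / r + 1 / q - 1 / 2) * P) ^ q := by
  have hd : Module.finrank ℝ V = d := by simpa using Module.finrank_eq_card_basis b.toBasis
  have hq' : 0 ≤ 1 / q - 1 / 2 := sub_nonneg.2 (one_div_le_one_div_of_le hq₀ hq₂)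
  have quadratic_bound : ∑ k, ‖y k‖ ^ (q - 2) * ‖L (y k)‖ ^ 2 ≤
      (2 * r ^ (3 / 2 : ℝ) * (d : ℝ) ^ (1 / r) * P) ^ (2 : ℝ) := by
    refine (hb.sum_mul_norm_sq_le_of_norm_le (fun k ↦ by positivity) hy (by positivity) hr₁ hP
      hLb).trans_eq ?_
    rw [Real.rpow_two, one_div, inv_pow, div_inv_eq_mul]
    linear_combination (-4 * ((d : ℝ) ^ r⁻¹ * P) ^ 2) * rpow_three_halves_sq hr₀.le
  calc ∑ k, ‖L (y k)‖ ^ q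
      ≤ (d : ℝ) ^ (1 - q / 2) * (∑ k, ‖y k‖ ^ (q - 2) * ‖L (y k)‖ ^ 2) ^ (q / 2) :=
        hd ▸ hy.sum_norm_rpow_le hq₀ hq₂ L
    _ ≤ (d : ℝ) ^ (1 - q / 2) *
        ((2 * r ^ (3 / 2 : ℝ) * (d : ℝ) ^ (1 / r) * P) ^ (2 : ℝ)) ^ (q / 2) :=
      mul_le_mul_of_nonneg_left (Real.rpow_le_rpow (Finset.sum_nonneg fun k _ ↦ by positivity)
        quadratic_bound (by positivity)) (by positivity)
    _ = ((d : ℝ) ^ (1 / q - 1 / 2)) ^ q *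
        (2 * r ^ (3 / 2 : ℝ) * (d : ℝ) ^ (1 / r) * P) ^ q := by
      rw [← Real.rpow_mul (by positivity), mul_div_cancel₀ q two_ne_zero,
        ← Real.rpow_mul (by positivity), show (1 / q - 1 / 2) * q = 1 - q / 2 by field_simp]
    _ = (2 * r ^ (3 / 2 : ℝ) * (d : ℝ) ^ (1 / r + 1 / q - 1 / 2) * P) ^ q := by
      rw [← Real.mul_rpow (by positivity) (by positivity), add_sub_assoc,
        Real.rpow_add_of_nonneg (by positivity) (by positivity) hq']
      ring_nf

theorem SummingLE.norm_apply_greedy_le {m d : ℕ} {T : X →L[ℝ] Y} (h : SummingLE p q m T P)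
    (hp : 0 < p) (hq₀ : 0 < q) (hq₂ : q ≤ 2) (hpq : 1 / q = 1 / p + 1 / r) (hP : 0 ≤ P)
    (hd : d ≤ m) {ω : V →L[ℝ] X} (hω : ‖ω‖ ≤ 1) {e : Fin d → V} (he : Orthonormal ℝ e)
    (hg : IsGreedy (T ∘L ω) e) (j : Fin d) :
    ‖T (ω (e j))‖ ≤ ((j : ℝ) + 1) ^ (1 / r - 1 / 2) * P := by
  have antitone {i : Fin d} (hij : i ≤ j) : ‖T (ω (e j))‖ ≤ ‖T (ω (e i))‖ := by
    simpa [he.1 j] using hg i (e j) fun k hk ↦ he.2 (hk.trans_le hij).ne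
  have hj : (j : ℕ) + 1 ≤ d := j.isLt
  simpa using h.le_of_forall_le_norm_apply_orthonormal hp hq₀ hq₂ hpq hP
    (by simpa using hj.trans hd) (he.comp _ (Fin.castLE_injective hj)) hω (norm_nonneg _)
    fun i ↦ antitone (Fin.mk_le_of_le_val (Nat.lt_succ_iff.1 i.isLt))

end Synthesis

section RankBounds

variable {X Y : Type*} [NormedAddCommGroup X] [NormedSpace ℝ X] [NormedAddCommGroup Y]
  [NormedSpace ℝ Y] {p q r P K : ℝ} {m n N : ℕ} {T : X →L[ℝ] Y}

theorem RankLE.finrank_span_le (hT : RankLE T n) {ι : Type*} (x : ι → X) :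
    Module.finrank ℝ (Submodule.span ℝ (Set.range fun k ↦ T (x k))) ≤ n := by
  have := hT.1
  refine (Submodule.finrank_mono (Submodule.span_le.2 ?_)).trans hT.2
  rintro _ ⟨k, rfl⟩
  exact ⟨x k, rfl⟩

theorem RankLE.eq_zero (hT : RankLE T 0) : T = 0 := by
  have := hT.1
  ext v
  simpa [Submodule.finrank_eq_zero.1 (Nat.le_zero.1 hT.2)] using
    LinearMap.mem_range_self (T : X →ₗ[ℝ] Y) v

theorem SummingLE.of_rankLE (h : SummingLE p q n T P) (hT : RankLE T n) (hp : 0 < p) (hq₁ : 1 ≤ q)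
    (hq₂ : q ≤ 2) (hr : 0 < r) (hpq : 1 / q = 1 / p + 1 / r) (hP : 0 ≤ P) (N : ℕ) :
    SummingLE q q N T (2 * r ^ (3 / 2 : ℝ) * (n : ℝ) ^ (1 / r + 1 / q - 1 / 2) * P) := by
  intro x hx
  have hq₀ : 0 < q := by linarith
  have hr₁ : 1 / r ≤ 1 := by
    linarith [one_div_pos.2 hp, (div_le_one hq₀).2 hq₁]
  set d := Module.finrank ℝ (Submodule.span ℝ (Set.range fun k ↦ T (x k))) with hd
  have hdn : d ≤ n := hT.finrank_span_le x
  obtain ⟨y, L, hy, hL⟩ := exists_isLewisPosition_factorization hq₀ hq₂ (fun k ↦ T (x k)) hd.symm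
  set ω := frameSynthesis (fun k ↦ ‖y k‖ ^ (q - 2)) y x
  have hω : ‖ω‖ ≤ 1 := hy.norm_frameSynthesis_le_one hq₁ hq₂ hx
  obtain rfl : T ∘L ω = L := hy.comp_frameSynthesis hL
  obtain ⟨b, hb⟩ := exists_orthonormalBasis_isGreedy (T ∘L ω) finrank_euclideanSpace_fin
  have hdn' : (d : ℝ) ≤ n := by exact_mod_cast hdn
  have hq' : 1 / 2 ≤ 1 / q := one_div_le_one_div_of_le hq₀ hq₂
  have exponent_nonneg : 0 ≤ 1 / r + 1 / q - 1 / 2 := by linarith [one_div_pos.2 hr]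
  calc ∑ k, ‖T (x k)‖ ^ q = ∑ k, ‖(T ∘L ω) (y k)‖ ^ q := by simp only [hL]
    _ ≤ (2 * r ^ (3 / 2 : ℝ) * (d : ℝ) ^ (1 / r + 1 / q - 1 / 2) * P) ^ q :=
      hy.sum_norm_rpow_le_of_isGreedy hq₀ hq₂ hr hr₁ hP hb
        (h.norm_apply_greedy_le hp hq₀ hq₂ hpq hP hdn hω b.orthonormal hb)
    _ ≤ (2 * r ^ (3 / 2 : ℝ) * (n : ℝ) ^ (1 / r + 1 / q - 1 / 2) * P) ^ q := by gcongr

theorem SummingLE.card_lt (h : SummingLE p q m T P) (hp : 0 < p) (hq : 0 < q) (hP : 0 ≤ P)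
    (hm : 0 < m) {ι : Type*} [Fintype ι] {x : ι → X} (hx : WeakSumLE q 1 x) {S : Finset ι}
    (hS : ∀ k ∈ S, P ^ p / m < ‖T (x k)‖ ^ p) : S.card < m := by
  by_contra! hmS
  obtain ⟨S', hS', hcard⟩ := Finset.exists_subset_card_eq hmS
  have upper : ∑ k ∈ S', ‖T (x k)‖ ^ p ≤ P ^ p := by
    rw [← Finset.sum_coe_sort]
    simpa using h.sum_le hp hq one_pos hP (by simp [hcard])
      (hx.comp_injective (e := ((↑) : S' → ι)) Subtype.val_injective)
  have lower : ∑ _k ∈ S', P ^ p / m < ∑ k ∈ S', ‖T (x k)‖ ^ p :=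
    Finset.sum_lt_sum_of_nonempty (Finset.card_pos.1 (hcard ▸ hm)) fun k hk ↦ hS k (hS' hk)
  rw [Finset.sum_const, hcard, nsmul_eq_mul, mul_div_cancel₀ _ (by positivity)] at lower
  exact lower.not_ge upper

theorem SummingLE.of_summingLE (h : SummingLE p q m T P) (hm : 0 < m) (hp : 0 < p) (hq : 0 < q)
    (hr : 0 < r) (hpq : 1 / q = 1 / p + 1 / r) (hP : 0 ≤ P) (hK : 0 ≤ K)
    (hN : SummingLE q q N T (K * (m : ℝ) ^ (1 / r) * P)) :
    SummingLE p q N T ((1 + K ^ q) ^ (1 / p) * P) := by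
  intro x hx
  have hqp : q ≤ p := (one_div_le_one_div hp hq).1 (by linarith [one_div_pos.2 hr])
  have exponent_nonneg : 0 ≤ 1 - q / p := sub_nonneg.2 ((div_le_one hp).2 hqp)
  have split_power {t : ℝ} (ht : 0 ≤ t) : (t ^ p) ^ (1 - q / p) * t ^ q = t ^ p := by
    rw [← Real.rpow_mul ht, ← Real.rpow_add_of_nonneg ht (by positivity) hq.le]
    congr 1
    field_simp
    ring
  let S : Finset (Fin N) := {k | P ^ p / m < ‖T (x k)‖ ^ p}
  have head : ∑ k ∈ S, ‖T (x k)‖ ^ p ≤ P ^ p := by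
    have hS : S.card ≤ m := (h.card_lt hp hq hP hm hx (by simp [S])).le
    rw [← Finset.sum_coe_sort]
    simpa using h.sum_le hp hq one_pos hP (by simpa using hS)
      (hx.comp_injective (e := ((↑) : S → Fin N)) Subtype.val_injective)
  have tail_term (k : Fin N) (hk : k ∈ Sᶜ) :
      ‖T (x k)‖ ^ p ≤ (P ^ p / m) ^ (1 - q / p) * ‖T (x k)‖ ^ q := by
    have hk' : ‖T (x k)‖ ^ p ≤ P ^ p / m := by simpa [S] using hk
    rw [← split_power (norm_nonneg (T (x k)))]
    gcongr
  have tail : ∑ k ∈ Sᶜ, ‖T (x k)‖ ^ p ≤ K ^ q * P ^ p := calc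
    ∑ k ∈ Sᶜ, ‖T (x k)‖ ^ p ≤ ∑ k ∈ Sᶜ, (P ^ p / m) ^ (1 - q / p) * ‖T (x k)‖ ^ q :=
      Finset.sum_le_sum tail_term
    _ ≤ ∑ k, (P ^ p / m) ^ (1 - q / p) * ‖T (x k)‖ ^ q :=
      Finset.sum_le_univ_sum_of_nonneg fun k ↦ by positivity
    _ = (P ^ p / m) ^ (1 - q / p) * ∑ k, ‖T (x k)‖ ^ q := (Finset.mul_sum ..).symm
    _ ≤ (P ^ p / m) ^ (1 - q / p) * (K * (m : ℝ) ^ (1 / r) * P) ^ q :=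
      mul_le_mul_of_nonneg_left (hN x hx) (by positivity)
    _ = K ^ q * P ^ p := by
      have exponent_eq : 1 / r * q = 1 - q / p := by
        linear_combination (-q) * hpq + mul_one_div_cancel hq.ne'
      rw [Real.mul_rpow (by positivity) hP, Real.mul_rpow hK (by positivity),
        ← Real.rpow_mul (by positivity), exponent_eq, Real.div_rpow (by positivity) (by positivity),
        div_mul_eq_mul_div, div_eq_iff (by positivity)]
      linear_combination K ^ q * (m : ℝ) ^ (1 - q / p) * split_power hP
  rw [Real.mul_rpow (by positivity) hP, ← Real.rpow_mul (by positivity),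
    one_div_mul_cancel hp.ne', Real.rpow_one, ← Finset.sum_add_sum_compl S]
  linarith

end RankBounds

section MainTheorem

variable {X Y : Type*} [NormedAddCommGroup X] [NormedSpace ℝ X] [NormedAddCommGroup Y]
  [NormedSpace ℝ Y] {p q r P : ℝ} {n : ℕ} {T : X →L[ℝ] Y}

theorem SummingLE.of_floor_rpow_rankLE
    (h : SummingLE p q ⌊(n : ℝ) ^ (1 + r * (1 / q - 1 / 2))⌋₊ T P) (hT : RankLE T n) (hp : 0 < p)
    (hq₁ : 1 ≤ q) (hq₂ : q ≤ 2) (hr : 0 < r) (hpq : 1 / q = 1 / p + 1 / r) (hP : 0 ≤ P) (N : ℕ) :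
    SummingLE p q N T ((17 * Real.exp 3) ^ (r / p) * P) := by
  have hq₀ : 0 < q := by linarith
  have hr₁ : 1 ≤ r := (div_le_one hr).1 (by linarith [one_div_pos.2 hp, (div_le_one hq₀).2 hq₁])
  have hq' : 0 ≤ 1 / q - 1 / 2 := sub_nonneg.2 (one_div_le_one_div_of_le hq₀ hq₂)
  obtain rfl | hn := n.eq_zero_or_pos
  · intro x _
    simpa [hT.eq_zero, hp.ne'] using by positivity
  set t := (n : ℝ) ^ (1 + r * (1 / q - 1 / 2))
  have one_le_n : (1 : ℝ) ≤ n := by exact_mod_cast hn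
  have n_le_t : (n : ℝ) ≤ t := Real.self_le_rpow_of_one_le one_le_n (by nlinarith)
  have t_root : (n : ℝ) ^ (1 / r + 1 / q - 1 / 2) = t ^ (1 / r) := by
    rw [← Real.rpow_mul (by positivity)]
    congr 1
    field_simp
    ring
  have q_summing : SummingLE q q N T
      (2 * r ^ (3 / 2 : ℝ) * 2 ^ (1 / r) * (⌊t⌋₊ : ℝ) ^ (1 / r) * P) := by
    refine ((h.mono hp hq₀ hP (Nat.le_floor n_le_t)).of_rankLE hT hp hq₁ hq₂ hr hpq hP N).trans_le
      hq₀.le (by positivity) ?_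
    rw [t_root, mul_assoc (2 * _) (2 ^ (1 / r))]
    gcongr
    exact rpow_div_le_two_rpow_mul_floor_rpow (one_le_n.trans n_le_t) hr
  refine (h.of_summingLE (Nat.floor_pos.2 (one_le_n.trans n_le_t)) hp hq₀ hr hpq hP (by positivity)
    q_summing).trans_le hp.le (by positivity) ?_
  rw [div_eq_mul_one_div r p, Real.rpow_mul (by positivity)]
  gcongr
  exact one_add_rpow_le_const_rpow hq₂ hr₁

theorem eSum_zero {ι : Type*} [Fintype ι] (f : ι → ℝ≥0∞) : eSum 0 f = 1 := by
  simp [eSum]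

theorem piN_zero {q : ℝ} (hq : 0 < q) (m : ℕ) (T : X →L[ℝ] Y) :
    piN 0 (ENNReal.ofReal q) m T = 1 := by
  have weakLq_zero : weakLq (ENNReal.ofReal q) (0 : Fin m → X) ≤ 1 :=
    (weakLq_le_one_iff hq).2 fun f _ ↦ by simp [hq.ne']
  have : Nonempty {x : Fin m → X // weakLq (ENNReal.ofReal q) x ≤ 1} := ⟨⟨0, weakLq_zero⟩⟩
  simp only [piN, eSum_zero, ciSup_const]

end MainTheorem

theorem statement12_general :
    ∃ c₀ : ℝ, 0 < c₀ ∧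
      ∀ q r p : ℝ, 1 ≤ q → q ≤ 2 → q < r → 1 / q = 1 / p + 1 / r →
        ∀ (X Y : Type*) [NormedAddCommGroup X] [NormedSpace ℝ X]
          [NormedAddCommGroup Y] [NormedSpace ℝ Y] (n : ℕ) (T : X →L[ℝ] Y), RankLE T n →
          piPQ (ENNReal.ofReal p) (ENNReal.ofReal q) T ≤
            ENNReal.ofReal (c₀ ^ (r / p)) *
              piN (ENNReal.ofReal p) (ENNReal.ofReal q)
                (⌊(n : ℝ) ^ (1 + r * (1 / q - 1 / 2))⌋₊) T := by
  refine ⟨17 * Real.exp 3, by positivity, fun q r p hq₁ hq₂ hqr hpq X Y _ _ _ _ n T hT ↦ ?_⟩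
  have hq₀ : 0 < q := by linarith
  have hp : 0 < p := one_div_pos.1 (by linarith [one_div_lt_one_div_of_lt hq₀ hqr])
  exact piPQ_le_mul_piN hp hq₀ (by positivity) fun P hP h ↦
    h.of_floor_rpow_rankLE hT hp hq₁ hq₂ (hq₀.trans hqr) hpq hP

/-- for `1 ≤ q ≤ 2`, `2 ≤ r ≤ q'` (`q'` the conjugate exponent
of `q`) and `p` with `1/q = 1/p + 1/r`, there is an absolute constant `c₀` with
`π_{p,q}(T) ≤ c₀^{r/p} π_{p,q}^{⌊n^{1 + r(1/q - 1/2)}⌋}(T)` for every operator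
`T` of rank at most `n`. -/
theorem statement12 :
    ∃ c₀ : ℝ, 0 < c₀ ∧
      ∀ (q r p : ℝ) (q' : ℝ≥0∞), 1 ≤ q → q ≤ 2 →
        1 / ENNReal.ofReal q + 1 / q' = 1 → 2 ≤ r → ENNReal.ofReal r ≤ q' →
        1 / q = 1 / p + 1 / r →
        ∀ (X Y : Type*) [NormedAddCommGroup X] [NormedSpace ℝ X] [CompleteSpace X]
          [NormedAddCommGroup Y] [NormedSpace ℝ Y] [CompleteSpace Y]
          (n : ℕ) (T : X →L[ℝ] Y), RankLE T n →
          piPQ (ENNReal.ofReal p) (ENNReal.ofReal q) T ≤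
            ENNReal.ofReal (c₀ ^ (r / p)) *
              piN (ENNReal.ofReal p) (ENNReal.ofReal q)
                (⌊(n : ℝ) ^ (1 + r * (1 / q - 1 / 2))⌋₊) T := by
  obtain ⟨c₀, hc₀, h⟩ := statement12_general
  refine ⟨c₀, hc₀, fun q r p _ hq₁ hq₂ _ hr _ hpq X Y _ _ _ _ _ _ n T hT ↦ ?_⟩
  obtain hqr | rfl := (hq₂.trans hr).lt_or_eq
  · exact h q r p hq₁ hq₂ hqr hpq X Y n T hT
  · -- Here `p = ∞`, which the equation `1 / q = 1 / p + 1 / r` encodes as `p = 0`.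
    obtain rfl : p = 0 := by simpa using hpq
    simp [piPQ, piN_zero (zero_lt_one.trans_le hq₁)]

end
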